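/- As n → ∞, p_σ(n+1) ∼ e^{4π√n/√23} / (n^{5/4}·23^{1/4}·√2); that is, the sequence p_σ(n+1) · n^{5/4} · 23^{1/4} · √2 / exp(4π·√n/√23) tends to 1 as n → ∞. -/

import Mathlib

open Filter

/-- `p n` is the classical partition function: the number of partitions of `n`. -/
def p (n : ℕ) : ℕ := Fintype.card (Nat.Partition n)

/-- `pSigma n = ∑_{j ≥ 0, 23j ≤ n} p(n − 23j)·p(j)`, the Fourier coefficients in
`q·η(z)⁻¹η(23z)⁻¹ = ∑_{n≥0} pSigma(n)qⁿ`. -/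
def pSigma (n : ℕ) : ℕ := ∑ j ∈ Finset.range (n / 23 + 1), p (n - 23 * j) * p j

open Complex (I)
open scoped Real Topology PowerSeries Complex

/-!
Write `P` for the Euler product `∏ (1 - q ^ n)⁻¹`. Cauchy's formula gives the coefficients of
`P(q) P(q ^ ℓ)` as integrals over circles `q = exp (-τ)` with `Re τ` constant. The modularity of `η`
turns `P(q) P(q ^ ℓ)` into `√ℓ τ / (2π) * exp (A / τ - c * τ)`, where `c = (ℓ + 1) / 24` and
`A = 4π²c / ℓ`, times a factor tending to `1` as `τ → 0` inside a sector, so that `exp (n * τ)`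
times the generating function has its saddle at `τ = s²` with `n - c = A / s⁴`. On the circle
`Re τ = s²`, with angle `θ = s³u` measured in the width `s³` of the saddle, the integrand tends to a
Gaussian. No division into major and minor arcs is needed: comparing the Euler product with its
value at `|q|` factor by factor gives `|P(q)| ≤ P(|q|) exp (-(|q| / (1 - |q|) - Re (q / (1 - q))))`,
and this already makes the rescaled integrand `O(1 / (1 + u²))` uniformly on the whole circle, so
dominated convergence applies.
-/

/-! ### Integrals over growing intervals -/

theorem tendsto_intervalIntegral_neg_of_dominated {ι E : Type*} [NormedAddCommGroup E]
    [NormedSpace ℝ E] {l : Filter ι} [l.IsCountablyGenerated] {F : ι → ℝ → E} {f : ℝ → E}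
    {R : ι → ℝ} {bound : ℝ → ℝ} (hR : Tendsto R l atTop)
    (hF : ∀ᶠ i in l, MeasureTheory.AEStronglyMeasurable (F i))
    (hbound : ∀ᶠ i in l, ∀ u, |u| ≤ R i → ‖F i u‖ ≤ bound u)
    (hint : MeasureTheory.Integrable bound) (hlim : ∀ u, Tendsto (F · u) l (𝓝 (f u))) :
    Tendsto (fun i => ∫ u in (-R i)..R i, F i u) l (𝓝 (∫ u, f u)) := by
  have hindicator : Tendsto (fun i => ∫ u, (Set.Ioc (-R i) (R i)).indicator (F i) u) l
      (𝓝 (∫ u, f u)) := by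
    refine MeasureTheory.tendsto_integral_filter_of_dominated_convergence (fun u => ‖bound u‖)
      (hF.mono fun i hi => hi.indicator measurableSet_Ioc) ?_ hint.norm (.of_forall fun u => ?_)
    · refine hbound.mono fun i hi => .of_forall fun u => ?_
      rw [norm_indicator_eq_indicator_norm]
      exact Set.indicator_apply_le' (fun hu => (hi u (abs_le.2 ⟨hu.1.le, hu.2⟩)).trans
        (le_abs_self _)) fun _ => norm_nonneg _
    · refine (hlim u).congr' ?_
      filter_upwards [hR.eventually_gt_atTop |u|] with i hi
      have hmem : u ∈ Set.Ioc (-R i) (R i) := ⟨(abs_lt.1 hi).1, (abs_lt.1 hi).2.le⟩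
      exact (Set.indicator_of_mem hmem _).symm
  refine hindicator.congr' ?_
  filter_upwards [hR.eventually_ge_atTop 0] with i hi
  rw [MeasureTheory.integral_indicator measurableSet_Ioc,
    intervalIntegral.integral_of_le (by linarith)]

/-! ### Power series evaluated at complex numbers -/

theorem hasSum_coeff_mul {f g : ℂ⟦X⟧} {q s t : ℂ} (hf : HasSum (fun n => f.coeff n * q ^ n) s)
    (hg : HasSum (fun n => g.coeff n * q ^ n) t) :
    HasSum (fun n => (f * g).coeff n * q ^ n) (s * t) := by
  have cauchyProduct : ∀ n, (f * g).coeff n * q ^ n =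
      ∑ kl ∈ Finset.HasAntidiagonal.antidiagonal n,
        f.coeff kl.1 * q ^ kl.1 * (g.coeff kl.2 * q ^ kl.2) := by
    intro n
    rw [PowerSeries.coeff_mul, Finset.sum_mul]
    refine Finset.sum_congr rfl fun kl hkl => ?_
    rw [← Finset.HasAntidiagonal.mem_antidiagonal.1 hkl, pow_add]
    ring
  simp_rw [cauchyProduct, ← hf.tsum_eq, ← hg.tsum_eq]
  rw [tsum_mul_tsum_eq_tsum_sum_antidiagonal_of_summable_norm hf.summable.norm hg.summable.norm]
  exact (summable_norm_sum_mul_antidiagonal_of_summable_norm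
    hf.summable.norm hg.summable.norm).of_norm.hasSum

theorem hasSum_coeff_expand {k : ℕ} (hk : k ≠ 0) {f : ℂ⟦X⟧} {q s : ℂ}
    (hf : HasSum (fun n => f.coeff n * (q ^ k) ^ n) s) :
    HasSum (fun n => (f.expand k hk).coeff n * q ^ n) s := by
  rw [← (mul_right_injective₀ hk).hasSum_iff]
  · simpa [Function.comp_def, PowerSeries.coeff_expand_mul, pow_mul] using hf
  · intro n hn
    have hdvd : ¬ k ∣ n := fun ⟨m, hm⟩ => hn ⟨m, hm.symm⟩
    rw [PowerSeries.coeff_expand_of_not_dvd _ _ _ hdvd, zero_mul]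

theorem coeff_mul_expand {R : Type*} [CommRing R] {k : ℕ} (hk : k ≠ 0) (f g : R⟦X⟧) (n : ℕ) :
    (f * g.expand k hk).coeff n =
      ∑ j ∈ Finset.range (n / k + 1), f.coeff (n - k * j) * g.coeff j := by
  rw [PowerSeries.coeff_mul, ← Finset.Nat.sum_antidiagonal_swap,
    Finset.Nat.sum_antidiagonal_eq_sum_range_succ_mk]
  refine (Finset.sum_of_injOn (k * ·) (mul_right_injective₀ hk).injOn ?_ ?_ ?_).symm
  · intro j hj
    simp only [Finset.coe_range, Set.mem_Iio, Nat.lt_succ_iff] at hj ⊢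
    exact (Nat.mul_le_mul_left k hj).trans (Nat.mul_div_le n k)
  · intro i hi hnot
    have hdvd : ¬ k ∣ i := by
      rintro ⟨j, rfl⟩
      refine hnot ⟨j, ?_, rfl⟩
      simp only [Finset.coe_range, Finset.mem_range, Set.mem_Iio, Nat.lt_succ_iff] at hi ⊢
      exact (Nat.le_div_iff_mul_le (Nat.pos_of_ne_zero hk)).2 (by rwa [mul_comm])
    simp [PowerSeries.coeff_expand_of_not_dvd _ _ _ hdvd]
  · intro j _
    simp [PowerSeries.coeff_expand_mul]

theorem tsum_X_pow_mul {R : Type*} [CommRing R] [TopologicalSpace R] [IsTopologicalRing R]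
    [T2Space R] {k : ℕ} (hk : k ≠ 0) :
    open scoped PowerSeries.WithPiTopology in
    ∑' j : ℕ, (PowerSeries.X : R⟦X⟧) ^ (k * j) = (PowerSeries.mk 1).expand k hk := by
  open scoped PowerSeries.WithPiTopology in
  have hgeom : (∑' j : ℕ, (PowerSeries.X : R⟦X⟧) ^ (k * j)) * (1 - PowerSeries.X ^ k) = 1 := by
    simp_rw [pow_mul]
    exact PowerSeries.WithPiTopology.tsum_pow_mul_one_sub_of_constantCoeff_eq_zero
      (by simp [hk])
  have hexpand : (1 - PowerSeries.X ^ k) * (PowerSeries.mk 1).expand k hk = (1 : R⟦X⟧) := by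
    simpa [mul_comm] using
      congrArg (PowerSeries.expand k hk) (PowerSeries.mk_one_mul_one_sub_eq_one R)
  exact left_inv_eq_right_inv hgeom hexpand

theorem integral_circleMap_pow_mul_inv_pow {r : ℝ} (hr : 0 < r) (n m : ℕ) :
    ∫ θ in (-π)..π, circleMap 0 r θ ^ n * (circleMap 0 r θ ^ m)⁻¹ =
      if n = m then (2 * π : ℂ) else 0 := by
  split_ifs with hnm
  · have hne : ∀ θ, circleMap 0 r θ ≠ 0 := fun _ => circleMap_ne_center hr.ne'
    simp only [hnm, mul_inv_cancel₀ (pow_ne_zero m (hne _)), intervalIntegral.integral_const,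
      sub_neg_eq_add, ← two_mul, Complex.real_smul, Complex.ofReal_mul, Complex.ofReal_ofNat,
      mul_one]
  have hfreq : ((n : ℂ) - m) * I ≠ 0 :=
    mul_ne_zero (sub_ne_zero.2 (by exact_mod_cast hnm)) Complex.I_ne_zero
  have hperiodic : cexp (((n : ℂ) - m) * I * π) = cexp (((n : ℂ) - m) * I * (-π : ℝ)) :=
    Complex.exp_eq_exp_iff_exists_int.2 ⟨(n : ℤ) - m, by push_cast; ring⟩
  have hexp : ∀ θ : ℝ, circleMap 0 r θ ^ n * (circleMap 0 r θ ^ m)⁻¹ =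
      (r : ℂ) ^ n * ((r : ℂ) ^ m)⁻¹ * cexp (((n : ℂ) - m) * I * θ) := fun θ => by
    rw [show ((n : ℂ) - m) * I * θ = n * (θ * I) - m * (θ * I) by ring,
      Complex.exp_sub, Complex.exp_nat_mul, Complex.exp_nat_mul, circleMap_zero]
    simp only [mul_pow, mul_inv]
    ring
  simp_rw [hexp]
  rw [intervalIntegral.integral_const_mul, integral_exp_mul_complex hfreq, hperiodic, sub_self,
    zero_div, mul_zero]

theorem two_pi_mul_coeff_eq_integral {a : ℕ → ℂ} {F : ℂ → ℂ} {r : ℝ} (hr : 0 < r)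
    (hF : ∀ q : ℂ, ‖q‖ = r → HasSum (fun n => a n * q ^ n) (F q)) (m : ℕ) :
    2 * π * a m = ∫ θ in (-π)..π, F (circleMap 0 r θ) * (circleMap 0 r θ ^ m)⁻¹ := by
  have hnorm : ∀ θ, ‖circleMap 0 r θ‖ = r := fun θ => by simp [abs_of_pos hr]
  have hne : ∀ θ, circleMap 0 r θ ^ m ≠ 0 := fun _ => pow_ne_zero m (circleMap_ne_center hr.ne')
  have htermwise := intervalIntegral.hasSum_integral_of_dominated_convergence
    (μ := MeasureTheory.volume) (a := -π) (b := π)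
    (F := fun n (θ : ℝ) => a n * circleMap 0 r θ ^ n * (circleMap 0 r θ ^ m)⁻¹)
    (fun n _ => ‖a n * (r : ℂ) ^ n‖ * (r ^ m)⁻¹)
    (fun n => Continuous.aestronglyMeasurable (by fun_prop (disch := assumption)))
    (fun n => .of_forall fun θ _ => by
      rw [norm_mul, norm_mul, norm_inv, norm_pow, norm_pow, hnorm, norm_mul, norm_pow,
        Complex.norm_of_nonneg hr.le])
    (.of_forall fun θ _ => (hF r (Complex.norm_of_nonneg hr.le)).summable.norm.mul_right _)
    (by simp)
    (.of_forall fun θ _ => (hF _ (hnorm θ)).mul_right _)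
  simp_rw [mul_assoc, intervalIntegral.integral_const_mul,
    integral_circleMap_pow_mul_inv_pow hr] at htermwise
  rw [htermwise.unique (hasSum_single m fun n hn => by simp [hn]), if_pos rfl, mul_comm]

/-! ### The partition generating function -/

/-- The Euler product `∏ (1 - q ^ n)⁻¹`, which is `∑ p(n) q ^ n` in the open unit disc. -/
noncomputable def partitionGF (q : ℂ) : ℂ := (∏' n : ℕ, (1 - q ^ (n + 1)))⁻¹

theorem tprod_one_sub_pow_ne_zero {q : ℂ} (hq : ‖q‖ < 1) : ∏' n : ℕ, (1 - q ^ (n + 1)) ≠ 0 := by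
  simp_rw [sub_eq_add_neg]
  refine tprod_one_add_ne_zero_of_summable (fun n hn => ?_) ?_
  · have hlt : ‖q ^ (n + 1)‖ < 1 := by
      rw [norm_pow]; exact pow_lt_one₀ (norm_nonneg _) hq n.succ_ne_zero
    rw [← sub_eq_add_neg, sub_eq_zero] at hn
    simp [← hn] at hlt
  · simpa using (summable_nat_add_iff 1).2 (summable_geometric_of_lt_one (norm_nonneg _) hq)

theorem partitionGF_ne_zero {q : ℂ} (hq : ‖q‖ < 1) : partitionGF q ≠ 0 :=
  inv_ne_zero (tprod_one_sub_pow_ne_zero hq)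

theorem tendsto_prod_inv_partitionGF {q : ℂ} (hq : ‖q‖ < 1) :
    Tendsto (fun N => ∏ i ∈ Finset.range N, (1 - q ^ (i + 1))⁻¹) atTop (𝓝 (partitionGF q)) := by
  simp_rw [Finset.prod_inv_distrib]
  exact (ModularForm.multipliable_one_sub_pow hq).hasProd.tendsto_prod_nat.inv₀
    (tprod_one_sub_pow_ne_zero hq)

theorem continuousOn_partitionGF : ContinuousOn partitionGF (Metric.ball 0 1) :=
  ModularForm.differentiableOn_tprod_one_sub_pow.continuousOn.inv₀ fun _ hq =>
    tprod_one_sub_pow_ne_zero (by simpa using hq)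

theorem tendsto_partitionGF_zero : Tendsto partitionGF (𝓝 0) (𝓝 1) := by
  have hcont : ContinuousAt partitionGF 0 :=
    continuousOn_partitionGF.continuousAt (Metric.ball_mem_nhds _ one_pos)
  simpa [ContinuousAt, partitionGF] using hcont

/-- The number of partitions of `n` into parts of size at most `N`. -/
def boundedPartitionCount (N n : ℕ) : ℕ := (Nat.Partition.restricted n (· ≤ N)).card

theorem boundedPartitionCount_le (N n : ℕ) : boundedPartitionCount N n ≤ p n :=
  Finset.card_le_univ _

theorem boundedPartitionCount_of_le {N n : ℕ} (h : n ≤ N) : boundedPartitionCount N n = p n := by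
  rw [boundedPartitionCount, Nat.Partition.restricted, Finset.filter_true_of_mem, p,
    Finset.card_univ]
  exact fun P _ i hi => (Multiset.le_sum_of_mem hi).trans (P.parts_sum.trans_le h)

theorem mk_boundedPartitionCount (N : ℕ) :
    PowerSeries.mk (fun n => (boundedPartitionCount N n : ℂ)) =
      ∏ i ∈ Finset.range N, (PowerSeries.mk 1).expand (i + 1) i.succ_ne_zero := by
  open scoped PowerSeries.WithPiTopology in
  have hfinite := hasProd_prod_of_ne_finset_one (s := Finset.range N) (L := .unconditional ℕ)
    (f := fun i => if i + 1 ≤ N then ∑' j : ℕ, (PowerSeries.X : ℂ⟦X⟧) ^ ((i + 1) * j) else 1)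
    fun i hi => if_neg fun hle => hi (Finset.mem_range.2 hle)
  refine ((Nat.Partition.hasProd_powerSeriesMk_card_restricted ℂ (· ≤ N)).unique hfinite).trans
    (Finset.prod_congr rfl fun i hi => ?_)
  rw [if_pos (Nat.succ_le_of_lt (Finset.mem_range.1 hi)), tsum_X_pow_mul i.succ_ne_zero]

theorem hasSum_boundedPartitionCount (N : ℕ) {q : ℂ} (hq : ‖q‖ < 1) :
    HasSum (fun n => (boundedPartitionCount N n : ℂ) * q ^ n)
      (∏ i ∈ Finset.range N, (1 - q ^ (i + 1))⁻¹) := by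
  suffices h : HasSum (fun n => (∏ i ∈ Finset.range N,
      (PowerSeries.mk 1 : ℂ⟦X⟧).expand (i + 1) i.succ_ne_zero).coeff n * q ^ n)
      (∏ i ∈ Finset.range N, (1 - q ^ (i + 1))⁻¹) by
    simpa only [← mk_boundedPartitionCount, PowerSeries.coeff_mk] using h
  induction N with
  | zero =>
    simpa using hasSum_single (f := fun n => (1 : ℂ⟦X⟧).coeff n * q ^ n) 0 fun n hn => by
      rw [PowerSeries.coeff_one, if_neg hn, zero_mul]
  | succ N ih =>
    have hlt : ‖q ^ (N + 1)‖ < 1 := by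
      rw [norm_pow]; exact pow_lt_one₀ (norm_nonneg _) hq N.succ_ne_zero
    simp_rw [Finset.prod_range_succ]
    exact hasSum_coeff_mul ih
      (hasSum_coeff_expand N.succ_ne_zero (by simpa using hasSum_geometric_of_norm_lt_one hlt))

theorem summable_norm_partition_mul_pow {q : ℂ} (hq : ‖q‖ < 1) :
    Summable fun n => ‖(p n : ℂ) * q ^ n‖ := by
  have hr : ‖(‖q‖ : ℂ)‖ < 1 := by simpa using hq
  obtain ⟨C, hC⟩ := (tendsto_prod_inv_partitionGF hr).norm.bddAbove_range
  refine summable_of_sum_range_le (c := C) (fun _ => norm_nonneg _) fun M => ?_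
  have hterm : ∀ n, ‖(boundedPartitionCount M n : ℂ) * q ^ n‖ =
      ((boundedPartitionCount M n : ℂ) * (‖q‖ : ℂ) ^ n).re := fun n => by
    rw [norm_mul, norm_pow, Complex.norm_natCast]; norm_cast
  have hreal : HasSum (fun n => ‖(boundedPartitionCount M n : ℂ) * q ^ n‖)
      (∏ i ∈ Finset.range M, (1 - (‖q‖ : ℂ) ^ (i + 1))⁻¹).re := by
    simp_rw [hterm]
    exact Complex.hasSum_re (hasSum_boundedPartitionCount M hr)
  calc ∑ n ∈ Finset.range M, ‖(p n : ℂ) * q ^ n‖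
      = ∑ n ∈ Finset.range M, ‖(boundedPartitionCount M n : ℂ) * q ^ n‖ :=
        Finset.sum_congr rfl fun n hn => by
          rw [boundedPartitionCount_of_le (Finset.mem_range.1 hn).le]
    _ ≤ (∏ i ∈ Finset.range M, (1 - (‖q‖ : ℂ) ^ (i + 1))⁻¹).re :=
        sum_le_hasSum _ (fun n _ => norm_nonneg _) hreal
    _ ≤ C := (Complex.re_le_norm _).trans (hC ⟨M, rfl⟩)

theorem hasSum_partition {q : ℂ} (hq : ‖q‖ < 1) :
    HasSum (fun n => (p n : ℂ) * q ^ n) (partitionGF q) := by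
  have hsum := summable_norm_partition_mul_pow hq
  have hlim : Tendsto (fun N => ∑' n, (boundedPartitionCount N n : ℂ) * q ^ n) atTop
      (𝓝 (∑' n, (p n : ℂ) * q ^ n)) := by
    refine tendsto_tsum_of_dominated_convergence hsum (fun n => ?_) (.of_forall fun N n => ?_)
    · refine tendsto_const_nhds.congr' ?_
      filter_upwards [eventually_ge_atTop n] with N hN
      rw [boundedPartitionCount_of_le hN]
    · simp only [norm_mul, norm_pow, Complex.norm_natCast]
      gcongr
      exact boundedPartitionCount_le N n
  simp_rw [(hasSum_boundedPartitionCount _ hq).tsum_eq] at hlim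
  rw [tendsto_nhds_unique (tendsto_prod_inv_partitionGF hq) hlim]
  exact hsum.of_norm.hasSum

theorem norm_partitionGF_le {q : ℂ} (hq : ‖q‖ < 1) : ‖partitionGF q‖ ≤ ‖partitionGF ‖q‖‖ := by
  have hr : ‖(‖q‖ : ℂ)‖ < 1 := by simpa using hq
  have hreal : HasSum (fun n => ‖(p n : ℂ) * q ^ n‖) (partitionGF ‖q‖).re := by
    refine (Complex.hasSum_re (hasSum_partition hr)).congr_fun fun n => ?_
    rw [norm_mul, norm_pow, Complex.norm_natCast]; norm_cast
  calc ‖partitionGF q‖ = ‖∑' n, (p n : ℂ) * q ^ n‖ := by rw [(hasSum_partition hq).tsum_eq]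
    _ ≤ (partitionGF ‖q‖).re := tsum_of_norm_bounded hreal fun _ => le_rfl
    _ ≤ ‖partitionGF ‖q‖‖ := Complex.re_le_norm _

/-- The number of pairs of partitions `(μ, ν)` with `|μ| + ℓ |ν| = n`, for `ℓ ≠ 0`; the paper's
`p_σ` is the case `ℓ = 23`. -/
def bipartitionCount (ℓ n : ℕ) : ℕ := ∑ j ∈ Finset.range (n / ℓ + 1), p (n - ℓ * j) * p j

/-- The generating function of `bipartitionCount ℓ`, the eta quotient `q ^ c / (η(z) η(ℓz))` with
`c = (ℓ + 1) / 24` and `q = exp (2πiz)`. -/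
noncomputable def bipartitionGF (ℓ : ℕ) (q : ℂ) : ℂ := partitionGF q * partitionGF (q ^ ℓ)

theorem hasSum_bipartitionCount {ℓ : ℕ} (hℓ : 0 < ℓ) {q : ℂ} (hq : ‖q‖ < 1) :
    HasSum (fun n => (bipartitionCount ℓ n : ℂ) * q ^ n) (bipartitionGF ℓ q) := by
  have hqℓ : ‖q ^ ℓ‖ < 1 := by
    rw [norm_pow]; exact pow_lt_one₀ (norm_nonneg _) hq hℓ.ne'
  let P : ℂ⟦X⟧ := PowerSeries.mk fun n => (p n : ℂ)
  have hP : ∀ {w : ℂ}, ‖w‖ < 1 → HasSum (fun n => P.coeff n * w ^ n) (partitionGF w) :=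
    fun hw => by simpa [P] using hasSum_partition hw
  have hprod := hasSum_coeff_mul (hP hq) (hasSum_coeff_expand hℓ.ne' (hP hqℓ))
  simp_rw [coeff_mul_expand] at hprod
  simpa [bipartitionCount, bipartitionGF, P] using hprod

/-! ### The functional equation -/

theorem csqrt_mul_self (z : ℂ) : z.sqrt * z.sqrt = z := by
  rw [Complex.sqrt, ← sq, ← Nat.cast_ofNat, Complex.cpow_nat_inv_pow z two_ne_zero]

theorem csqrt_mul_of_re_pos {z w : ℂ} (hz : 0 ≤ z.re) (hw : 0 < w.re) :
    (z * w).sqrt = z.sqrt * w.sqrt := by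
  rcases eq_or_ne z 0 with rfl | hz0
  · simp
  have hw0 : w ≠ 0 := by rintro rfl; simp at hw
  have hargz := abs_le.1 (Complex.abs_arg_le_pi_div_two_iff.2 hz)
  have hargw := abs_lt.1 (Complex.abs_arg_lt_pi_div_two_iff.2 (.inl hw))
  have hlog : Complex.log (z * w) = Complex.log z + Complex.log w :=
    Complex.log_mul hz0 hw0 ⟨by linarith, by linarith⟩
  simp only [Complex.sqrt, Complex.cpow_def_of_ne_zero, hz0, hw0, mul_ne_zero_iff, ne_eq,
    not_false_eq_true, and_self, hlog, add_mul, Complex.exp_add]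

theorem csqrt_ofReal_mul {r : ℝ} (hr : 0 ≤ r) {w : ℂ} (hw : 0 < w.re) :
    (r * w).sqrt = √r * w.sqrt := by
  rw [csqrt_mul_of_re_pos (by simpa using hr) hw]
  congr 1
  rw [Complex.sqrt_of_nonneg (by exact_mod_cast hr), Complex.ofReal_re]

theorem norm_exp_neg_lt_one {τ : ℂ} (hτ : 0 < τ.re) : ‖cexp (-τ)‖ < 1 := by
  rwa [Complex.norm_exp, Real.exp_lt_one_iff, Complex.neg_re, neg_lt_zero]

theorem re_ofReal_div_pos {r : ℝ} (hr : 0 < r) {τ : ℂ} (hτ : 0 < τ.re) : 0 < (r / τ).re := by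
  have hτ0 : τ ≠ 0 := by rintro rfl; simp at hτ
  rw [div_eq_mul_inv, Complex.re_ofReal_mul, Complex.inv_re]
  exact mul_pos hr (div_pos hτ (Complex.normSq_pos.2 hτ0))

theorem re_div_two_pi_pos {τ : ℂ} (hτ : 0 < τ.re) : 0 < (τ / (2 * π)).re := by
  rw [← Complex.ofReal_ofNat, ← Complex.ofReal_mul, Complex.div_ofReal_re]
  positivity

theorem eta_I_mul_div_two_pi (τ : ℂ) :
    ModularForm.eta (I * τ / (2 * π)) = cexp (-τ / 24) * (partitionGF (cexp (-τ)))⁻¹ := by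
  have hexp : 2 * π * I * (I * τ / (2 * π)) = -τ := by
    field_simp
    linear_combination τ * Complex.I_sq
  simp only [ModularForm.eta, ModularForm.eta_q_eq_pow, Function.Periodic.qParam, partitionGF,
    Complex.ofReal_ofNat, hexp, inv_inv]

theorem partitionGF_exp_neg {τ : ℂ} (hτ : 0 < τ.re) :
    partitionGF (cexp (-τ)) = (τ / (2 * π)).sqrt * cexp (π ^ 2 / (6 * τ) - τ / 24) *
      partitionGF (cexp (-(4 * π ^ 2 / τ))) := by
  have hτ0 : τ ≠ 0 := by rintro rfl; simp at hτ
  have hπ : (π : ℂ) ≠ 0 := by exact_mod_cast Real.pi_ne_zero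
  have hw := re_div_two_pi_pos hτ
  have hz : I * τ / (2 * π) ∈ UpperHalfPlane.upperHalfPlaneSet := by
    simpa [UpperHalfPlane.upperHalfPlaneSet, mul_div_assoc] using hw
  have hsqrtI : Complex.sqrt I ≠ 0 := fun h =>
    Complex.I_ne_zero (by simpa [h] using (csqrt_mul_self I).symm)
  have hmodular : ModularForm.eta (I * (4 * π ^ 2 / τ) / (2 * π)) =
      (τ / (2 * π)).sqrt * ModularForm.eta (I * τ / (2 * π)) := by
    have hinv : -1 / (I * τ / (2 * π)) = I * (4 * π ^ 2 / τ) / (2 * π) := by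
      field_simp
      linear_combination -4 * Complex.I_sq
    have h := ModularForm.eta_comp_eq_csqrt_I_inv hz
    simp only [Function.comp_apply, Pi.smul_apply, Pi.mul_apply, smul_eq_mul, hinv] at h
    rw [h, mul_div_assoc I τ, csqrt_mul_of_re_pos (by simp) hw, mul_assoc,
      inv_mul_cancel_left₀ hsqrtI]
  rw [eta_I_mul_div_two_pi, eta_I_mul_div_two_pi] at hmodular
  have hexp : cexp (π ^ 2 / (6 * τ) - τ / 24) * cexp (-(4 * π ^ 2 / τ) / 24) =
      cexp (-τ / 24) := by
    rw [← Complex.exp_add]; congr 1; field_simp; ring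
  have hP := partitionGF_ne_zero (norm_exp_neg_lt_one hτ)
  have hP' : partitionGF (cexp (-(4 * π ^ 2 / τ))) ≠ 0 := by
    have hre := re_ofReal_div_pos (r := 4 * π ^ 2) (by positivity) hτ
    exact partitionGF_ne_zero (norm_exp_neg_lt_one (by simpa using hre))
  rw [← mul_assoc, ← div_eq_mul_inv, ← div_eq_mul_inv, div_eq_div_iff hP' hP, ← hexp] at hmodular
  refine mul_left_cancel₀ (Complex.exp_ne_zero (-(4 * π ^ 2 / τ) / 24)) ?_
  linear_combination hmodular

/-- The order `(ℓ + 1) / 24` at the cusp `∞` of `η(z) η(ℓz)`. -/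
noncomputable def etaOrder (ℓ : ℕ) : ℝ := (ℓ + 1) / 24

/-- The coefficient of `1 / τ` in the exponential growth of `bipartitionGF ℓ (exp (-τ))`. -/
noncomputable def growthRate (ℓ : ℕ) : ℝ := 4 * π ^ 2 * etaOrder ℓ / ℓ

theorem bipartitionGF_exp_neg {ℓ : ℕ} (hℓ : 0 < ℓ) {τ : ℂ} (hτ : 0 < τ.re) :
    bipartitionGF ℓ (cexp (-τ)) =
      √ℓ * τ / (2 * π) * cexp (growthRate ℓ / τ - etaOrder ℓ * τ) *
        (partitionGF (cexp (-(4 * π ^ 2 / τ))) *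
          partitionGF (cexp (-(4 * π ^ 2 / (ℓ * τ))))) := by
  have hτ0 : τ ≠ 0 := by rintro rfl; simp at hτ
  have hℓ0 : (ℓ : ℂ) ≠ 0 := by exact_mod_cast hℓ.ne'
  have hℓτ : 0 < (ℓ * τ).re := by
    rw [← Complex.ofReal_natCast, Complex.re_ofReal_mul]; positivity
  have hw := re_div_two_pi_pos hτ
  have hpow : cexp (-τ) ^ ℓ = cexp (-(ℓ * τ)) := by
    rw [← Complex.exp_nat_mul, mul_neg]
  have hsqrt : (τ / (2 * π)).sqrt * (ℓ * τ / (2 * π)).sqrt = √ℓ * τ / (2 * π) := by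
    rw [mul_div_assoc, ← Complex.ofReal_natCast, csqrt_ofReal_mul ℓ.cast_nonneg hw,
      mul_left_comm, csqrt_mul_self, mul_div_assoc]
  have hexp : cexp (π ^ 2 / (6 * τ) - τ / 24) * cexp (π ^ 2 / (6 * (ℓ * τ)) - ℓ * τ / 24) =
      cexp (growthRate ℓ / τ - etaOrder ℓ * τ) := by
    rw [← Complex.exp_add, growthRate, etaOrder]
    congr 1
    push_cast
    field_simp
    ring
  rw [bipartitionGF, hpow, partitionGF_exp_neg hτ, partitionGF_exp_neg hℓτ, ← hsqrt, ← hexp]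
  ring

/-! ### Decay along circles -/

theorem norm_inv_one_sub_le {w : ℂ} (hw : ‖w‖ < 1) :
    ‖(1 - w)⁻¹‖ ≤ (1 - ‖w‖)⁻¹ * rexp (-(‖w‖ - w.re)) := by
  have hne : 1 - w ≠ 0 := sub_ne_zero.2 fun h => by simp [← h] at hw
  have hlog : HasSum (fun n : ℕ => (w ^ (n + 1)).re / (n + 1)) (-Real.log ‖1 - w‖) := by
    have h := (hasSum_nat_add_iff' 1).2 (Complex.hasSum_re (Complex.hasSum_taylorSeries_neg_log hw))
    simp only [Complex.div_natCast_re, Finset.sum_range_one, Nat.cast_zero, div_zero, sub_zero,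
      Complex.neg_re, Complex.log_re] at h
    exact_mod_cast h
  have hlognorm := Real.hasSum_pow_div_log_of_abs_lt_one (x := ‖w‖) (by simpa using hw)
  have hfirst : ‖w‖ - w.re ≤ -Real.log (1 - ‖w‖) - -Real.log ‖1 - w‖ := by
    simpa using le_hasSum (hlognorm.sub hlog) 0 fun n _ => by
      rw [sub_nonneg]
      gcongr
      exact (Complex.re_le_norm _).trans_eq (norm_pow w _)
  rw [norm_inv, ← Real.exp_log (norm_pos_iff.2 hne), ← Real.exp_log (sub_pos.2 hw),
    ← Real.exp_neg, ← Real.exp_neg, ← Real.exp_add]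
  gcongr
  linarith

theorem norm_partitionGF_le_mul_exp_tsum {q : ℂ} (hq : ‖q‖ < 1) :
    ‖partitionGF q‖ ≤
      ‖partitionGF ‖q‖‖ * rexp (-(‖q‖ / (1 - ‖q‖) - (q / (1 - q)).re)) := by
  have hr : ‖(‖q‖ : ℂ)‖ < 1 := by simpa using hq
  have hsum : HasSum (fun n : ℕ => q ^ (n + 1)) (q / (1 - q)) := by
    simpa only [pow_succ', div_eq_mul_inv] using (hasSum_geometric_of_norm_lt_one hq).mul_left q
  have hsumNorm : HasSum (fun n : ℕ => ‖q‖ ^ (n + 1)) (‖q‖ / (1 - ‖q‖)) := by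
    simpa only [pow_succ', div_eq_mul_inv] using
      (hasSum_geometric_of_lt_one (norm_nonneg q) hq).mul_left ‖q‖
  have hgain := (hsumNorm.sub (Complex.hasSum_re hsum)).tendsto_sum_nat
  refine le_of_tendsto_of_tendsto' (tendsto_prod_inv_partitionGF hq).norm
    ((tendsto_prod_inv_partitionGF hr).norm.mul (hgain.neg.rexp)) fun N => ?_
  rw [← Finset.sum_neg_distrib, Real.exp_sum, norm_prod, norm_prod, ← Finset.prod_mul_distrib]
  refine Finset.prod_le_prod (fun _ _ => norm_nonneg _) fun i _ => ?_
  have hlt : ‖q‖ ^ (i + 1) < 1 := pow_lt_one₀ (norm_nonneg _) hq i.succ_ne_zero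
  have hfactor : ‖(1 - (‖q‖ : ℂ) ^ (i + 1))⁻¹‖ = (1 - ‖q ^ (i + 1)‖)⁻¹ := by
    rw [norm_pow, norm_inv]
    norm_cast
    rw [Real.norm_of_nonneg (sub_nonneg.2 hlt.le)]
  rw [hfactor, ← norm_pow]
  exact norm_inv_one_sub_le (by rwa [norm_pow])

theorem norm_div_one_sub_sub_re {q : ℂ} (hq : ‖q‖ < 1) :
    ‖q‖ / (1 - ‖q‖) - (q / (1 - q)).re =
      (1 + ‖q‖) * (‖q‖ - q.re) / ((1 - ‖q‖) * ((1 - ‖q‖) ^ 2 + 2 * (‖q‖ - q.re))) := by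
  have hr : 0 < 1 - ‖q‖ := sub_pos.2 hq
  have hd : 0 ≤ ‖q‖ - q.re := sub_nonneg.2 (Complex.re_le_norm q)
  have hN : 0 < (1 - ‖q‖) ^ 2 + 2 * (‖q‖ - q.re) := by positivity
  have hsq : ‖q‖ ^ 2 = q.re ^ 2 + q.im ^ 2 := by
    rw [Complex.sq_norm, Complex.normSq_apply, sq, sq]
  have hnormSq : Complex.normSq (1 - q) = (1 - ‖q‖) ^ 2 + 2 * (‖q‖ - q.re) := by
    simp only [Complex.normSq_apply, Complex.sub_re, Complex.sub_im, Complex.one_re,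
      Complex.one_im]
    linear_combination -hsq
  have hre : (q / (1 - q)).re = (q.re - ‖q‖ ^ 2) / ((1 - ‖q‖) ^ 2 + 2 * (‖q‖ - q.re)) := by
    simp only [Complex.div_re, hnormSq, Complex.sub_re, Complex.sub_im, Complex.one_re,
      Complex.one_im, ← add_div]
    congr 1
    linear_combination hsq
  rw [hre, div_sub_div _ _ hr.ne' hN.ne']
  congr 1
  ring

theorem norm_partitionGF_le_mul_exp {q : ℂ} (hq : ‖q‖ < 1) :
    ‖partitionGF q‖ ≤ ‖partitionGF ‖q‖‖ * rexp (-((1 + ‖q‖) * (‖q‖ - q.re) /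
      ((1 - ‖q‖) * ((1 - ‖q‖) ^ 2 + 2 * (‖q‖ - q.re))))) :=
  (norm_partitionGF_le_mul_exp_tsum hq).trans_eq (by rw [norm_div_one_sub_sub_re hq])

theorem pi_sq_le_ten : π ^ 2 ≤ 10 := by
  nlinarith [Real.pi_lt_d2, Real.pi_pos]

theorem sq_div_five_le_one_sub_cos {θ : ℝ} (hθ : |θ| ≤ π) : θ ^ 2 / 5 ≤ 1 - Real.cos θ := by
  have hcos := Real.cos_le_one_sub_mul_cos_sq hθ
  have hcoeff : 1 / 5 ≤ 2 / π ^ 2 := by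
    rw [div_le_div_iff₀ (by norm_num) (by positivity)]
    linarith [pi_sq_le_ten]
  linarith [mul_le_mul_of_nonneg_right hcoeff (sq_nonneg θ)]

theorem sq_div_le_exp_gain {s u : ℝ} (hs : 0 < s) (hs1 : s ^ 2 ≤ 1 / 2) (hu : |s ^ 3 * u| ≤ π) :
    u ^ 2 / (10 + 4 * s ^ 2 * u ^ 2) ≤
      (1 + rexp (-s ^ 2)) * (rexp (-s ^ 2) * (1 - Real.cos (s ^ 3 * u))) /
        ((1 - rexp (-s ^ 2)) * ((1 - rexp (-s ^ 2)) ^ 2 +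
          2 * (rexp (-s ^ 2) * (1 - Real.cos (s ^ 3 * u))))) := by
  have hk := sq_div_five_le_one_sub_cos hu
  have hr0 : 0 < rexp (-s ^ 2) := Real.exp_pos _
  have hr1 : rexp (-s ^ 2) < 1 := Real.exp_lt_one_iff.2 (neg_lt_zero.2 (by positivity))
  have hr2 : 1 - s ^ 2 ≤ rexp (-s ^ 2) := Real.one_sub_le_exp_neg _
  generalize 1 - Real.cos (s ^ 3 * u) = k at hk ⊢
  generalize rexp (-s ^ 2) = r at hr0 hr1 hr2 ⊢
  have hk0 : 0 ≤ k := (by positivity : 0 ≤ (s ^ 3 * u) ^ 2 / 5).trans hk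
  have : 0 < 1 - r := sub_pos.2 hr1
  calc u ^ 2 / (10 + 4 * s ^ 2 * u ^ 2) ≤ 1 / 2 * k / (s ^ 2 * (s ^ 4 + 2 * k)) := by
        rw [div_le_div_iff₀ (by positivity) (by positivity)]
        nlinarith
    _ ≤ (1 + r) * (r * k) / ((1 - r) * ((1 - r) ^ 2 + 2 * (r * k))) := by
        have hnum : 1 / 2 * k ≤ (1 + r) * (r * k) := by
          rw [← mul_assoc]
          gcongr
          nlinarith
        have hsq : (1 - r) ^ 2 ≤ s ^ 4 := by
          rw [show s ^ 4 = (s ^ 2) ^ 2 by ring]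
          gcongr
          linarith
        gcongr
        · linarith
        · nlinarith

theorem cube_le_of_sq_mul_le {s u : ℝ} (h : s ^ 6 * u ^ 2 ≤ 10) :
    (10 + 4 * s ^ 2 * u ^ 2) ^ 3 ≤ 4000 + 2560 * u ^ 4 := by
  have hx : 0 ≤ 4 * s ^ 2 * u ^ 2 := by positivity
  calc (10 + 4 * s ^ 2 * u ^ 2) ^ 3
      ≤ 2 ^ (3 - 1) * (10 ^ 3 + (4 * s ^ 2 * u ^ 2) ^ 3) := add_pow_le (by norm_num) hx 3
    _ = 4000 + 256 * (s ^ 6 * u ^ 2) * u ^ 4 := by ring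
    _ ≤ 4000 + 256 * 10 * u ^ 4 := by gcongr
    _ = 4000 + 2560 * u ^ 4 := by ring

/- The condition `|s³u| ≤ π` makes `s²u²` at most of order `|u|^(4/3)`, so the exponent is at least
of order `|u|^(2/3)`, and its cube at least of order `u²`. -/
theorem exp_neg_sq_div_le {s u : ℝ} (hu : |s ^ 3 * u| ≤ π) :
    rexp (-(u ^ 2 / (10 + 4 * s ^ 2 * u ^ 2))) ≤ 40000 * (1 + u ^ 2)⁻¹ := by
  have hsu : s ^ 6 * u ^ 2 ≤ 10 := calc
    s ^ 6 * u ^ 2 = |s ^ 3 * u| ^ 2 := by rw [sq_abs]; ring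
    _ ≤ π ^ 2 := by gcongr
    _ ≤ 10 := pi_sq_le_ten
  have hD : 0 < 10 + 4 * s ^ 2 * u ^ 2 := by positivity
  set G := u ^ 2 / (10 + 4 * s ^ 2 * u ^ 2) with hG
  have hG0 : 0 ≤ G := by positivity
  have hcube : u ^ 6 ≤ G ^ 3 * (4000 + 2560 * u ^ 4) := calc
    u ^ 6 = G ^ 3 * (10 + 4 * s ^ 2 * u ^ 2) ^ 3 := by
      rw [← mul_pow, hG, div_mul_cancel₀ _ hD.ne']; ring
    _ ≤ G ^ 3 * (4000 + 2560 * u ^ 4) := by gcongr; exact cube_le_of_sq_mul_le hsu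
  have husq : u ^ 2 ≤ 1 + 6560 * G ^ 3 := by
    rcases le_total (u ^ 2) 1 with h | h
    · linarith [pow_nonneg hG0 3]
    · have h4 : 1 ≤ u ^ 4 := by nlinarith
      have hle : u ^ 2 * u ^ 4 ≤ 6560 * G ^ 3 * u ^ 4 := by nlinarith [pow_nonneg hG0 3]
      linarith [le_of_mul_le_mul_right hle (by linarith)]
  have hexp : G ^ 3 / 6 ≤ rexp G := by
    simpa [Nat.factorial] using Real.pow_div_factorial_le_exp G hG0 3
  have hone : 1 ≤ rexp G := Real.one_le_exp hG0
  rw [Real.exp_neg, ← div_eq_mul_inv, ← one_div, div_le_div_iff₀ (Real.exp_pos _) (by positivity)]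
  linarith

/-! ### The saddle point -/

/-- The points `τ` of a circle `|exp (-τ)| = exp (-s²)`, the argument of `exp (-τ)` being measured
in units of `s³`, which is the width of the saddle at `τ = s²`. -/
noncomputable def saddlePath (s u : ℝ) : ℂ := s ^ 2 * (1 - s * u * I)

/-- The Cauchy integrand for the coefficients of `bipartitionGF ℓ` along `saddlePath s`, rescaled so
as to converge to a Gaussian as `s → 0`. -/
noncomputable def saddleIntegrand (ℓ : ℕ) (s u : ℝ) : ℂ :=
  (1 - s * u * I) * cexp (-(growthRate ℓ * u ^ 2 / (1 - s * u * I))) *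
    (partitionGF (cexp (-(4 * π ^ 2 / saddlePath s u))) *
      partitionGF (cexp (-(4 * π ^ 2 / (ℓ * saddlePath s u)))))

/-- The scaling factor between the Cauchy integrand and `saddleIntegrand ℓ s`. -/
noncomputable def saddleFactor (ℓ : ℕ) (s : ℝ) : ℝ :=
  √ℓ * s ^ 2 / (2 * π) * rexp (2 * growthRate ℓ / s ^ 2)

theorem one_sub_mul_I_ne_zero (s u : ℝ) : (1 - s * u * I : ℂ) ≠ 0 := fun h => by
  simpa [mul_assoc] using congrArg Complex.re h

theorem saddlePath_re (s u : ℝ) : (saddlePath s u).re = s ^ 2 := by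
  rw [saddlePath, ← Complex.ofReal_pow, Complex.re_ofReal_mul]
  simp [mul_assoc]

theorem saddlePath_re_pos {s : ℝ} (hs : 0 < s) (u : ℝ) : 0 < (saddlePath s u).re := by
  rw [saddlePath_re]; positivity

theorem continuous_saddlePath (s : ℝ) : Continuous (saddlePath s) := by
  unfold saddlePath; fun_prop

theorem exp_neg_saddlePath (s u : ℝ) :
    cexp (-saddlePath s u) = circleMap 0 (rexp (-s ^ 2)) (s ^ 3 * u) := by
  rw [circleMap_zero, Complex.ofReal_exp, ← Complex.exp_add, saddlePath]
  congr 1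
  push_cast
  ring

theorem growthRate_pos {ℓ : ℕ} (hℓ : 0 < ℓ) : 0 < growthRate ℓ := by
  unfold growthRate etaOrder; positivity

theorem saddleFactor_pos {ℓ : ℕ} (hℓ : 0 < ℓ) {s : ℝ} (hs : 0 < s) : 0 < saddleFactor ℓ s := by
  unfold saddleFactor; positivity

theorem bipartitionGF_saddlePath {ℓ : ℕ} (hℓ : 0 < ℓ) {s : ℝ} (hs : 0 < s) (u : ℝ) :
    bipartitionGF ℓ (cexp (-saddlePath s u)) *
        cexp ((growthRate ℓ / s ^ 4 + etaOrder ℓ : ℝ) * saddlePath s u) =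
      saddleFactor ℓ s * saddleIntegrand ℓ s u := by
  have hs0 : (s : ℂ) ≠ 0 := by exact_mod_cast hs.ne'
  have hw := one_sub_mul_I_ne_zero s u
  have hexp : cexp (growthRate ℓ / saddlePath s u - etaOrder ℓ * saddlePath s u) *
      cexp ((growthRate ℓ / s ^ 4 + etaOrder ℓ : ℝ) * saddlePath s u) =
      cexp (2 * growthRate ℓ / s ^ 2) * cexp (-(growthRate ℓ * u ^ 2 / (1 - s * u * I))) := by
    rw [← Complex.exp_add, ← Complex.exp_add, saddlePath]
    congr 1
    push_cast
    field_simp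
    linear_combination (growthRate ℓ * s ^ 2 * u ^ 2 : ℂ) * Complex.I_sq
  rw [bipartitionGF_exp_neg hℓ (saddlePath_re_pos hs u), mul_right_comm, mul_assoc (_ / _) _ _,
    hexp, saddleFactor, saddleIntegrand]
  push_cast
  generalize partitionGF _ * partitionGF _ = P
  rw [saddlePath]
  ring

theorem four_mul_pi_sq_div_mul (ℓ : ℕ) (τ : ℂ) :
    4 * π ^ 2 / (ℓ * τ) = (4 * π ^ 2 / ℓ : ℝ) / τ := by
  push_cast
  rw [div_div]

theorem continuous_partitionGF_exp_neg_div {s : ℝ} (hs : 0 < s) {κ : ℝ} (hκ : 0 < κ) :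
    Continuous fun u => partitionGF (cexp (-(κ / saddlePath s u))) := by
  have hne : ∀ u, saddlePath s u ≠ 0 := fun u h => by
    simpa [h] using saddlePath_re_pos hs u
  have hpath := continuous_saddlePath s
  refine continuousOn_partitionGF.comp_continuous (by fun_prop (disch := assumption)) fun u => ?_
  simpa using norm_exp_neg_lt_one (re_ofReal_div_pos hκ (saddlePath_re_pos hs u))

theorem continuous_saddleIntegrand {ℓ : ℕ} (hℓ : 0 < ℓ) {s : ℝ} (hs : 0 < s) :
    Continuous (saddleIntegrand ℓ s) := by
  have hw := one_sub_mul_I_ne_zero s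
  have h₁ := continuous_partitionGF_exp_neg_div hs (κ := 4 * π ^ 2) (by positivity)
  have h₂ := continuous_partitionGF_exp_neg_div hs (κ := 4 * π ^ 2 / ℓ) (by positivity)
  simp_rw [← four_mul_pi_sq_div_mul] at h₂
  push_cast at h₁
  unfold saddleIntegrand
  fun_prop (disch := assumption)

theorem tendsto_partitionGF_exp_neg_div (u : ℝ) {κ : ℝ} (hκ : 0 < κ) :
    Tendsto (fun s => partitionGF (cexp (-(κ / saddlePath s u)))) (𝓝[>] 0) (𝓝 1) := by
  have hinv : Tendsto (fun s : ℝ => ((1 - s * u * I : ℂ)⁻¹).re) (𝓝[>] 0) (𝓝 1) := by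
    have hw := fun s => one_sub_mul_I_ne_zero s u
    have hcont := Complex.continuous_re.comp
      (Continuous.inv₀ (f := fun s : ℝ => (1 - s * u * I : ℂ)) (by fun_prop) hw)
    simpa [Function.comp_def] using (hcont.tendsto 0).mono_left nhdsWithin_le_nhds
  have hscale : Tendsto (fun s : ℝ => κ * (s⁻¹) ^ 2) (𝓝[>] 0) atTop :=
    ((tendsto_pow_atTop two_ne_zero).comp tendsto_inv_nhdsGT_zero).const_mul_atTop hκ
  have hre : Tendsto (fun s => (κ / saddlePath s u).re) (𝓝[>] 0) atTop := by
    refine (hscale.atTop_mul_pos one_pos hinv).congr fun s => ?_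
    rw [← Complex.re_ofReal_mul, saddlePath]
    push_cast
    rw [div_eq_mul_inv, mul_inv, inv_pow, mul_assoc]
  refine tendsto_partitionGF_zero.comp (tendsto_zero_iff_norm_tendsto_zero.2 ?_)
  simpa only [Function.comp_def, Complex.norm_exp, Complex.neg_re] using
    Real.tendsto_exp_neg_atTop_nhds_zero.comp hre

theorem tendsto_saddleIntegrand {ℓ : ℕ} (hℓ : 0 < ℓ) (u : ℝ) :
    Tendsto (fun s => saddleIntegrand ℓ s u) (𝓝[>] 0)
      (𝓝 ((rexp (-growthRate ℓ * u ^ 2) : ℝ) : ℂ)) := by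
  have h₁ := tendsto_partitionGF_exp_neg_div u (κ := 4 * π ^ 2) (by positivity)
  have h₂ := tendsto_partitionGF_exp_neg_div u (κ := 4 * π ^ 2 / ℓ) (by positivity)
  simp_rw [← four_mul_pi_sq_div_mul] at h₂
  have hgauss : Tendsto (fun s : ℝ =>
      (1 - s * u * I) * cexp (-(growthRate ℓ * u ^ 2 / (1 - s * u * I)))) (𝓝[>] 0)
      (𝓝 ((rexp (-growthRate ℓ * u ^ 2) : ℝ) : ℂ)) := by
    have hw := fun s => one_sub_mul_I_ne_zero s u
    have hcont : Continuous fun s : ℝ =>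
        (1 - s * u * I) * cexp (-(growthRate ℓ * u ^ 2 / (1 - s * u * I))) := by
      fun_prop (disch := assumption)
    simpa using (hcont.tendsto 0).mono_left nhdsWithin_le_nhds
  simpa [saddleIntegrand] using hgauss.mul (h₁.mul h₂)

theorem norm_bipartitionGF_saddlePath_le {ℓ : ℕ} (hℓ : 0 < ℓ) {s u : ℝ} (hs : 0 < s)
    (hs1 : s ^ 2 ≤ 1 / 2) (hu : |s ^ 3 * u| ≤ π) :
    ‖bipartitionGF ℓ (cexp (-saddlePath s u))‖ ≤
      ‖bipartitionGF ℓ (cexp (-saddlePath s 0))‖ * (40000 * (1 + u ^ 2)⁻¹) := by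
  set q := cexp (-saddlePath s u) with hq
  have hlt : ‖q‖ < 1 := norm_exp_neg_lt_one (saddlePath_re_pos hs u)
  have hltℓ : ‖q ^ ℓ‖ < 1 := by
    rw [norm_pow]; exact pow_lt_one₀ (norm_nonneg _) hlt hℓ.ne'
  have hnorm : ‖q‖ = rexp (-s ^ 2) := by
    rw [hq, Complex.norm_exp, Complex.neg_re, saddlePath_re]
  have hdefect : ‖q‖ - q.re = rexp (-s ^ 2) * (1 - Real.cos (s ^ 3 * u)) := by
    rw [hnorm, hq, exp_neg_saddlePath, circleMap_zero, Complex.re_ofReal_mul,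
      Complex.exp_ofReal_mul_I_re]
    ring
  have hcenter : cexp (-saddlePath s 0) = ‖q‖ := by
    rw [hnorm, exp_neg_saddlePath, mul_zero, circleMap_zero]
    simp
  have hdecay : ‖partitionGF q‖ ≤ ‖partitionGF ‖q‖‖ * (40000 * (1 + u ^ 2)⁻¹) := by
    refine (norm_partitionGF_le_mul_exp hlt).trans ?_
    gcongr
    refine le_trans ?_ (exp_neg_sq_div_le hu)
    rw [hdefect, hnorm]
    exact Real.exp_le_exp.2 (neg_le_neg (sq_div_le_exp_gain hs hs1 hu))
  have htrivial : ‖partitionGF (q ^ ℓ)‖ ≤ ‖partitionGF ((‖q‖ : ℂ) ^ ℓ)‖ := by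
    simpa using norm_partitionGF_le hltℓ
  rw [hcenter, bipartitionGF, bipartitionGF, norm_mul, norm_mul, mul_right_comm]
  gcongr

theorem norm_saddleIntegrand_le {ℓ : ℕ} (hℓ : 0 < ℓ) {s u : ℝ} (hs : 0 < s)
    (hs1 : s ^ 2 ≤ 1 / 2) (hu : |s ^ 3 * u| ≤ π) :
    ‖saddleIntegrand ℓ s u‖ ≤ ‖saddleIntegrand ℓ s 0‖ * (40000 * (1 + u ^ 2)⁻¹) := by
  have hfactor : ∀ v, saddleFactor ℓ s * ‖saddleIntegrand ℓ s v‖ =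
      ‖bipartitionGF ℓ (cexp (-saddlePath s v))‖ *
        rexp ((growthRate ℓ / s ^ 4 + etaOrder ℓ) * s ^ 2) := fun v => by
    rw [← Complex.norm_of_nonneg (saddleFactor_pos hℓ hs).le, ← norm_mul,
      ← bipartitionGF_saddlePath hℓ hs, norm_mul, Complex.norm_exp, Complex.re_ofReal_mul,
      saddlePath_re]
  refine le_of_mul_le_mul_left ?_ (saddleFactor_pos hℓ hs)
  rw [← mul_assoc, hfactor, hfactor, mul_right_comm]
  gcongr
  exact norm_bipartitionGF_saddlePath_le hℓ hs hs1 hu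

/-! ### The asymptotic formula -/

/-- The integral of `saddleIntegrand ℓ s` over one turn around the circle `|exp (-τ)| = exp (-s²)`,
that is over `|s³u| ≤ π`. -/
noncomputable def saddleIntegral (ℓ : ℕ) (s : ℝ) : ℂ :=
  ∫ u in (-(π / s ^ 3))..(π / s ^ 3), saddleIntegrand ℓ s u

theorem tendsto_saddleIntegral {ℓ : ℕ} (hℓ : 0 < ℓ) :
    Tendsto (saddleIntegral ℓ) (𝓝[>] 0) (𝓝 (√(π / growthRate ℓ) : ℝ)) := by
  rw [← integral_gaussian, ← integral_complex_ofReal]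
  refine tendsto_intervalIntegral_neg_of_dominated
    (bound := fun u => 2 * (40000 * (1 + u ^ 2)⁻¹)) ?_ ?_ ?_
    ((integrable_inv_one_add_sq.const_mul _).const_mul _) (tendsto_saddleIntegrand hℓ)
  · have hcube : Tendsto (fun s : ℝ => (s⁻¹) ^ 3) (𝓝[>] 0) atTop :=
      (tendsto_pow_atTop three_ne_zero).comp tendsto_inv_nhdsGT_zero
    simpa [div_eq_mul_inv] using hcube.const_mul_atTop Real.pi_pos
  · filter_upwards [self_mem_nhdsWithin] with s hs
    exact (continuous_saddleIntegrand hℓ hs).aestronglyMeasurable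
  · have hcenter : ∀ᶠ s in 𝓝[>] (0 : ℝ), ‖saddleIntegrand ℓ s 0‖ < 2 :=
      (tendsto_saddleIntegrand hℓ 0).norm.eventually_lt_const (by simp)
    filter_upwards [Ioo_mem_nhdsGT (show (0 : ℝ) < 1 / 2 by norm_num), hcenter]
      with s ⟨hs, hs2⟩ h0 u hu
    have hθ : |s ^ 3 * u| ≤ π := by
      rwa [abs_mul, abs_of_pos (pow_pos hs 3), mul_comm, ← le_div_iff₀ (pow_pos hs 3)]
    refine (norm_saddleIntegrand_le hℓ hs (by nlinarith) hθ).trans ?_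
    gcongr

theorem two_pi_mul_bipartitionCount {ℓ n : ℕ} (hℓ : 0 < ℓ) {s : ℝ} (hs : 0 < s)
    (hn : (n : ℝ) = growthRate ℓ / s ^ 4 + etaOrder ℓ) :
    2 * π * (bipartitionCount ℓ n : ℂ) = s ^ 3 * (saddleFactor ℓ s * saddleIntegral ℓ s) := by
  have hs3 : s ^ 3 ≠ 0 := by positivity
  have hintegrand : ∀ u, bipartitionGF ℓ (circleMap 0 (rexp (-s ^ 2)) (s ^ 3 * u)) *
      (circleMap 0 (rexp (-s ^ 2)) (s ^ 3 * u) ^ n)⁻¹ =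
      saddleFactor ℓ s * saddleIntegrand ℓ s u := fun u => by
    rw [← bipartitionGF_saddlePath hℓ hs, ← hn, ← exp_neg_saddlePath, ← Complex.exp_nat_mul,
      ← Complex.exp_neg, mul_neg, neg_neg, Complex.ofReal_natCast]
  have hsubst := intervalIntegral.smul_integral_comp_mul_left (a := -(π / s ^ 3)) (b := π / s ^ 3)
    (fun θ : ℝ => bipartitionGF ℓ (circleMap 0 (rexp (-s ^ 2)) θ) *
      (circleMap 0 (rexp (-s ^ 2)) θ ^ n)⁻¹) (s ^ 3)
  simp only [hintegrand, intervalIntegral.integral_const_mul, mul_neg, mul_div_cancel₀ π hs3,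
    Complex.real_smul, Complex.ofReal_pow] at hsubst
  have hr : rexp (-s ^ 2) < 1 := Real.exp_lt_one_iff.2 (neg_lt_zero.2 (by positivity))
  rw [saddleIntegral, hsubst]
  exact two_pi_mul_coeff_eq_integral (Real.exp_pos _)
    (fun q hq => hasSum_bipartitionCount hℓ (hq.trans_lt hr)) n

theorem bipartitionCount_eq {ℓ n : ℕ} (hℓ : 0 < ℓ) {s : ℝ} (hs : 0 < s)
    (hn : (n : ℝ) = growthRate ℓ / s ^ 4 + etaOrder ℓ) :
    (bipartitionCount ℓ n : ℝ) =
      √ℓ * s ^ 5 / (4 * π ^ 2) * rexp (2 * growthRate ℓ / s ^ 2) * (saddleIntegral ℓ s).re := by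
  have h := congrArg Complex.re (two_pi_mul_bipartitionCount hℓ hs hn)
  rw [← mul_assoc] at h
  norm_cast at h
  rw [Complex.re_ofReal_mul, saddleFactor] at h
  have hπ : 2 * π ≠ 0 := by positivity
  refine mul_left_cancel₀ hπ (h.trans ?_)
  field_simp
  ring

theorem saddle_normalization {ℓ : ℕ} (hℓ : 0 < ℓ) :
    √(π / growthRate ℓ) * (growthRate ℓ ^ (5 / 4 : ℝ) * √ℓ / (4 * π ^ 2) *
      ((ℓ : ℝ) ^ (1 / 4 : ℝ) * √2 / etaOrder ℓ ^ (3 / 4 : ℝ))) = 1 := by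
  have hc : 0 < etaOrder ℓ := by unfold etaOrder; positivity
  have hA := growthRate_pos hℓ
  have hrpow : ∀ {x : ℝ} (k : ℕ), 0 ≤ x → (x ^ (k / 4 : ℝ)) ^ 4 = x ^ k := fun k hx => by
    rw [← Real.rpow_mul_natCast hx, Nat.cast_ofNat, div_mul_cancel₀ _ four_ne_zero,
      Real.rpow_natCast]
  have hA5 := hrpow 5 hA.le
  have hc3 := hrpow 3 hc.le
  have hℓ1 := hrpow 1 (x := ℓ) ℓ.cast_nonneg
  push_cast at hA5 hc3 hℓ1
  have hsqrt : ∀ {x : ℝ}, 0 ≤ x → √x ^ 4 = x ^ 2 := fun hx => by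
    rw [show 4 = 2 * 2 from rfl, pow_mul, Real.sq_sqrt hx]
  rw [← pow_eq_one_iff_of_nonneg (by positivity) four_ne_zero]
  simp only [mul_pow, div_pow, hA5, hc3, hℓ1, hsqrt (div_nonneg Real.pi_pos.le hA.le),
    hsqrt zero_le_two, hsqrt ℓ.cast_nonneg]
  rw [growthRate]
  field_simp
  norm_num

theorem bipartitionCount_mul_rpow_div_exp {ℓ n : ℕ} (hℓ : 0 < ℓ) {s x : ℝ} (hs : 0 < s)
    (hx : 0 < x) (hsx : growthRate ℓ = x * s ^ 4) (hn : (n : ℝ) = x + etaOrder ℓ) :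
    bipartitionCount ℓ n * x ^ (5 / 4 : ℝ) / rexp (4 * π * √(etaOrder ℓ * x) / √ℓ) =
      (saddleIntegral ℓ s).re * (growthRate ℓ ^ (5 / 4 : ℝ) * √ℓ / (4 * π ^ 2)) := by
  have hℓ' : (0 : ℝ) < ℓ := by exact_mod_cast hℓ
  have hs5 : growthRate ℓ ^ (5 / 4 : ℝ) = x ^ (5 / 4 : ℝ) * s ^ 5 := by
    rw [hsx, Real.mul_rpow hx.le (by positivity), ← Real.rpow_natCast_mul hs.le]
    norm_num
  have hsq : etaOrder ℓ * x = (x * s ^ 2 / (2 * π)) ^ 2 * ℓ := by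
    rw [growthRate, div_eq_iff hℓ'.ne'] at hsx
    field_simp
    linear_combination hsx
  have hexp : 2 * growthRate ℓ / s ^ 2 = 4 * π * √(etaOrder ℓ * x) / √ℓ := by
    rw [hsq, Real.sqrt_mul (by positivity), Real.sqrt_sq (by positivity), hsx]
    field_simp
    norm_num
  rw [bipartitionCount_eq hℓ hs (by rw [hn, hsx, mul_div_cancel_right₀ _ (by positivity)]), hexp,
    hs5]
  have := Real.exp_ne_zero (4 * π * √(etaOrder ℓ * x) / √ℓ)
  field_simp

theorem tendsto_div_rpow_nhdsGT_zero {a b : ℝ} (ha : 0 < a) (hb : 0 < b) :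
    Tendsto (fun x : ℝ => (a / x) ^ b) atTop (𝓝[>] 0) := by
  refine tendsto_nhdsWithin_iff.2 ⟨?_, ?_⟩
  · simpa [hb.ne'] using (tendsto_id.const_div_atTop a).rpow_const (.inr hb.le)
  · filter_upwards [eventually_gt_atTop 0] with x hx
    exact Real.rpow_pos_of_pos (div_pos ha hx) b

theorem pSigma_asymptotic_general {ℓ : ℕ} (hℓ : 0 < ℓ) :
    Tendsto (fun n : ℕ => bipartitionCount ℓ n * (n - etaOrder ℓ) ^ (5 / 4 : ℝ) *
        (ℓ : ℝ) ^ (1 / 4 : ℝ) * √2 /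
          (etaOrder ℓ ^ (3 / 4 : ℝ) * rexp (4 * π * √(etaOrder ℓ * (n - etaOrder ℓ)) / √ℓ)))
      atTop (𝓝 1) := by
  have hA := growthRate_pos hℓ
  have hshift : Tendsto (fun n : ℕ => (n : ℝ) - etaOrder ℓ) atTop atTop :=
    tendsto_atTop_add_const_right _ _ tendsto_natCast_atTop_atTop
  have hscale := (tendsto_div_rpow_nhdsGT_zero hA (b := (4 : ℕ)⁻¹) (by norm_num)).comp hshift
  have hintegral := (Complex.continuous_re.tendsto _).comp ((tendsto_saddleIntegral hℓ).comp hscale)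
  have hlim := hintegral.mul_const (growthRate ℓ ^ (5 / 4 : ℝ) * √ℓ / (4 * π ^ 2) *
    ((ℓ : ℝ) ^ (1 / 4 : ℝ) * √2 / etaOrder ℓ ^ (3 / 4 : ℝ)))
  rw [Complex.ofReal_re, saddle_normalization hℓ] at hlim
  refine hlim.congr' ?_
  filter_upwards [hshift.eventually_gt_atTop 0] with n hn
  simp only [Function.comp_apply]
  rw [← mul_assoc, ← bipartitionCount_mul_rpow_div_exp hℓ (by positivity) hn ?_
    (sub_add_cancel _ _).symm]
  · ring
  · rw [Real.rpow_inv_natCast_pow (by positivity) four_ne_zero, mul_div_cancel₀ _ hn.ne']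

/-- As `n → ∞`, `p_σ(n+1) ∼ e^{4π√n/√23} / (n^{5/4}·23^{1/4}·√2)`; that is, the sequence
`p_σ(n+1) · n^{5/4} · 23^{1/4} · √2 / exp(4π·√n/√23)` tends to `1`. -/
theorem pSigma_asymptotic :
    Tendsto
      (fun n : ℕ =>
        (pSigma (n + 1) : ℝ) * (n : ℝ) ^ ((5 : ℝ) / 4) * (23 : ℝ) ^ ((1 : ℝ) / 4) * Real.sqrt 2 /
          Real.exp (4 * Real.pi * Real.sqrt n / Real.sqrt 23))
      atTop (nhds 1) := by
  have horder : etaOrder 23 = 1 := by norm_num [etaOrder]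
  simpa [horder, Function.comp_def, pSigma, bipartitionCount] using
    (pSigma_asymptotic_general (ℓ := 23) (by norm_num)).comp (tendsto_add_atTop_nat 1)
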